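/- Let m and n be positive integers and r an integer whose residue class is a unit modulo m with r^n ≡ 1 (mod m). Let G be the split metacyclic group with presentation ⟨x, y | x^m = y^n = 1, y·x·y⁻¹ = x^r⟩, realized concretely as the semidirect product (ℤ/mℤ) ⋊ (ℤ/nℤ) in which the generator of ℤ/nℤ acts on ℤ/mℤ by multiplication by r. Set d = gcd(m, r − 1)·gcd(m, 1 + r + r² + … + r^{n−1}) / m, which is a (positive) integer. Then the second group homology of G with trivial integer coefficients satisfies H₂(G, ℤ) ≅ ℤ/dℤ. (This is Lemma 5.13 of the paper, used to count connected components of the regular-representation component (𝔐_g[G])_{r.r} of the moduli space of G-marked curves.) -/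

import Mathlib

theorem smc_upper {E G : Type*} [Group E] [Group G] (p : E →* G)
    (hc : ∀ a : E, p a = 1 → ∀ b : E, a * b = b * a)
    (X Y : E) (m n : ℕ) (r : ℤ) (hX : p X ^ m = 1) (hY : p Y ^ n = 1)
    (hr : p Y * p X * (p Y)⁻¹ = p X ^ r)
    (hgen : ∀ g : G, ∃ i j : ℕ, g = p X ^ i * p Y ^ j) (T : E) (hT : T = Y * X * Y⁻¹ * X⁻¹) :
    T ^ m = 1 ∧ T ^ (∑ i ∈ Finset.range n, r ^ i) = 1 ∧ commutator E ≤ Subgroup.zpowers T := by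
  have hTX : Y * X * Y⁻¹ = T * X := by rw [hT]; group
  obtain ⟨a, ha⟩ : ∃ a, a = T * (X ^ (r - 1))⁻¹ := ⟨_, rfl⟩
  have hpT : p T = p X ^ (r - 1) := by
    rw [hT]; simp only [map_mul, map_inv]; rw [hr, zpow_sub_one]
  have hac : ∀ b, a * b = b * a := hc a (by rw [ha]; simp [hpT])
  have hTa : T = a * X ^ (r - 1) := by rw [ha]; group
  have hcomm : Commute T X := by
    rw [hTa]
    exact Commute.mul_left (hac X) ((Commute.refl X).zpow_left _)
  have h1 : T ^ m = 1 := by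
    have e1 : (Y * X * Y⁻¹) ^ m = X ^ m := by
      rw [conj_pow, ← hc (X ^ m) (by simpa using hX) Y]; group
    rw [hTX, hcomm.mul_pow] at e1
    exact mul_eq_right.mp e1
  have hYT : Y * T * Y⁻¹ = T ^ r := by
    have : Y * T * Y⁻¹ = a * (Y * X * Y⁻¹) ^ (r - 1) := by
      rw [conj_zpow]
      conv_lhs => rw [hTa]
      rw [← mul_assoc Y a, ← hac Y]; group
    rw [this, hTX, hcomm.mul_zpow]
    have : a * (T ^ (r - 1) * X ^ (r - 1)) = T ^ (r - 1) * (a * X ^ (r - 1)) := by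
      rw [← mul_assoc, hac, mul_assoc]
    rw [this, ← hTa, ← zpow_add_one]; congr 1; ring
  have hYk : ∀ k : ℕ, Y ^ k * X * (Y ^ k)⁻¹ = T ^ (∑ i ∈ Finset.range k, r ^ i) * X := by
    intro k
    induction k with
    | zero => simp
    | succ k ih =>
      have : Y ^ (k+1) * X * (Y ^ (k+1))⁻¹ = Y * (Y ^ k * X * (Y ^ k)⁻¹) * Y⁻¹ := by
        rw [pow_succ']; group
      rw [this, ih]
      have : Y * (T ^ (∑ i ∈ Finset.range k, r ^ i) * X) * Y⁻¹
        = (Y * T * Y⁻¹) ^ (∑ i ∈ Finset.range k, r ^ i) * (Y * X * Y⁻¹) := by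
        rw [conj_zpow]; group
      rw [this, hYT, hTX, ← mul_assoc, ← zpow_mul, ← zpow_add_one, Finset.sum_range_succ',
        Finset.mul_sum]
      simp [pow_succ, mul_comm]
  have h2 : T ^ (∑ i ∈ Finset.range n, r ^ i) = 1 := by
    have := hYk n
    rw [hc (Y ^ n) (by simpa using hY) X] at this
    exact (mul_eq_right.mp (by rw [← this]; group))
  refine ⟨h1, h2, ?_⟩
  have hYTk : ∀ k : ℕ, Y ^ k * T * (Y ^ k)⁻¹ = T ^ (r ^ k) := by
    intro k
    induction k with
    | zero => simp
    | succ k ih =>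
      have : Y ^ (k+1) * T * (Y ^ (k+1))⁻¹ = Y * (Y ^ k * T * (Y ^ k)⁻¹) * Y⁻¹ := by
        rw [pow_succ']; group
      rw [this, ih, ← conj_zpow, hYT, ← zpow_mul, pow_succ']
  have hE : ∀ e : E, ∃ (i j : ℕ) (c : E), (∀ b, c * b = b * c) ∧ e = X ^ i * Y ^ j * c := by
    intro e
    obtain ⟨i, j, h⟩ := hgen (p e)
    refine ⟨i, j, (X ^ i * Y ^ j)⁻¹ * e, hc _ ?_, by group⟩
    simp [h]
  have hN : (Subgroup.zpowers T).Normal := by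
    constructor
    rintro _ ⟨k, rfl⟩ e
    obtain ⟨i, j, c, hcc, rfl⟩ := hE e
    refine ⟨r ^ j * k, ?_⟩
    have : X ^ i * Y ^ j * c * T ^ k * (X ^ i * Y ^ j * c)⁻¹
      = X ^ i * (Y ^ j * T * (Y ^ j)⁻¹) ^ k * (X ^ i)⁻¹ := by
      rw [conj_zpow, mul_assoc _ c, hcc]; group
    simp only
    rw [this, hYTk, ← zpow_mul]
    rw [← ((hcomm.pow_right i).zpow_left _).eq]; group
  have hXY : Commute (X : E ⧸ Subgroup.zpowers T) (Y : E ⧸ Subgroup.zpowers T) := by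
    have : ((T : E) : E ⧸ Subgroup.zpowers T) = 1 :=
      (QuotientGroup.eq_one_iff T).2 (Subgroup.mem_zpowers T)
    have h := congrArg (fun e : E => (e : E ⧸ Subgroup.zpowers T)) hTX
    simp only [QuotientGroup.mk_mul, QuotientGroup.mk_inv, this, one_mul] at h
    exact (mul_inv_eq_iff_eq_mul.1 h).symm
  have hcc' : ∀ c : E, (∀ b, c * b = b * c) → ∀ b : E ⧸ Subgroup.zpowers T, Commute (c : E ⧸ Subgroup.zpowers T) b := by
    intro c hcc b
    obtain ⟨b, rfl⟩ := QuotientGroup.mk_surjective b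
    exact congrArg (fun e : E => (e : E ⧸ Subgroup.zpowers T)) (hcc b)
  rw [commutator_def, Subgroup.commutator_le]
  intro e _ f _
  rw [← QuotientGroup.eq_one_iff]
  obtain ⟨i, j, c, hcc, rfl⟩ := hE e
  obtain ⟨i', j', c', hcc2, rfl⟩ := hE f
  have hco : Commute (((X ^ i * Y ^ j * c : E)) : E ⧸ Subgroup.zpowers T) ((X ^ i' * Y ^ j' * c' : E) : E ⧸ Subgroup.zpowers T) := by
    simp only [QuotientGroup.mk_mul, QuotientGroup.mk_pow]
    refine Commute.mul_left (Commute.mul_right ?_ (hcc' _ hcc2 _).symm) (hcc' _ hcc _)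
    refine Commute.mul_left ?_ ?_
    · exact Commute.mul_right ((Commute.refl _).pow_pow _ _) (hXY.pow_pow _ _)
    · exact Commute.mul_right (hXY.symm.pow_pow _ _) ((Commute.refl _).pow_pow _ _)
  have := commutatorElement_eq_one_iff_commute.2 hco
  rw [← this]; simp [commutatorElement_def]

theorem smc_lower (m n g : ℕ) (r : ℤ) (hn : 0 < n)
    (hg : (g : ℤ) ∣ m) (hgN : (g : ℤ) ∣ ∑ i ∈ Finset.range n, r ^ i)
    (hgr : (m : ℤ) ∣ (r - 1) * g) (hrn : r ^ n ≡ 1 [ZMOD (m : ℤ)])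
    (G : Type) [Group G] (x y : G) (hx : ∀ k : ℤ, x ^ k = 1 ↔ (m : ℤ) ∣ k)
    (hxy : ∀ i j : ℤ, x ^ i * y ^ j = 1 → x ^ i = 1 ∧ (n : ℤ) ∣ j)
    (hr : y * x * y⁻¹ = x ^ r)
    (hgen : ∀ g : G, ∃ i j : ℕ, g = x ^ i * y ^ j) :
    ∃ (E : Type) (_ : Group E) (p : E →* G), Function.Surjective p ∧
      (∀ a : E, p a = 1 → ∀ b : E, a * b = b * a) ∧
      ∃ X Y : E, p X = x ∧ p Y = y ∧ ∀ k : ℤ, (Y * X * Y⁻¹ * X⁻¹) ^ k = 1 → (g : ℤ) ∣ k := by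
  have hrg : (r : ZMod g) ^ n = 1 := by
    have : r ^ n ≡ 1 [ZMOD (g : ℤ)] := hrn.of_dvd hg
    have := (ZMod.intCast_eq_intCast_iff _ _ _).2 this
    simpa using this
  obtain ⟨s, hs⟩ : ∃ s : ZMod g, r * s = 1 := ⟨r ^ (n - 1), by
    rw [← pow_succ', Nat.sub_add_cancel hn, hrg]⟩
  let σ : (ℤ × ZMod g) ≃+ (ℤ × ZMod g) :=
    { toFun := fun w => (w.1, w.1 + r * w.2)
      invFun := fun w => (w.1, s * (w.2 - w.1))
      left_inv := fun w => by ext <;> simp; linear_combination w.2 * hs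
      right_inv := fun w => by ext <;> simp; linear_combination (w.2 - w.1) * hs
      map_add' := fun w w' => by ext <;> simp; ring }
  have hσ : ∀ w, σ w = (w.1, w.1 + r * w.2) := fun w => rfl
  let σ' : MulAut (Multiplicative (ℤ × ZMod g)) := AddEquiv.toMultiplicative σ
  have hσ' : ∀ w, σ' (Multiplicative.ofAdd w) = Multiplicative.ofAdd (σ w) := fun w => rfl
  have hσk : ∀ (k : ℕ) w, (σ' ^ k) (Multiplicative.ofAdd w) =
      Multiplicative.ofAdd (w.1, (∑ i ∈ Finset.range k, (r : ZMod g) ^ i) * w.1 + r ^ k * w.2) := by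
    intro k w
    induction k with
    | zero => simp
    | succ k ih =>
      rw [pow_succ', MulAut.mul_apply, ih, hσ', hσ, geom_sum_succ]
      congr 2
      ring
  have hσn : σ' ^ n = 1 := by
    ext1 w
    induction w using Multiplicative.rec with | _ w => ?_
    have h0 : ∑ i ∈ Finset.range n, (r : ZMod g) ^ i = 0 := by
      have := (ZMod.intCast_zmod_eq_zero_iff_dvd _ _).2 hgN
      simpa using this
    rw [hσk, hrg, h0]; simp
  let ψ : Multiplicative ℤ →* MulAut (Multiplicative (ℤ × ZMod g)) := zpowersHom _ σ'
  have hψ : ∀ k : ℤ, ψ (Multiplicative.ofAdd k) = σ' ^ k := fun k => rfl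
  -- the map ZMod g → G
  let κ : ZMod g →+ Additive G := ZMod.lift g ⟨zmultiplesHom (Additive G) (Additive.ofMul (x ^ (r-1))), by
    rw [zmultiplesHom_apply, ← ofMul_zpow, ← zpow_mul]
    exact congrArg Additive.ofMul ((hx _).2 hgr)⟩
  have hκ : ∀ k : ℤ, κ (k : ZMod g) = Additive.ofMul (x ^ ((r-1) * k)) := by
    intro k
    show ZMod.lift g _ _ = _
    rw [ZMod.lift_coe, zmultiplesHom_apply, ← ofMul_zpow, ← zpow_mul]
  let f1 : Multiplicative (ℤ × ZMod g) →* G :=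
    { toFun := fun w => x ^ (w.toAdd.1) * (κ w.toAdd.2).toMul
      map_one' := by simp
      map_mul' := fun w w' => by
        obtain ⟨a, ha⟩ := ZMod.intCast_surjective w.toAdd.2
        obtain ⟨b, hb⟩ := ZMod.intCast_surjective w'.toAdd.2
        simp only [toAdd_mul, Prod.fst_add, Prod.snd_add, map_add]
        rw [← ha, ← hb, hκ, hκ]
        simp only [toMul_add, toMul_ofMul, ← zpow_add]
        congr 1; ring }
  have hf1 : ∀ i k : ℤ, f1 (Multiplicative.ofAdd (i, (k : ZMod g))) = x ^ (i + (r-1) * k) := by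
    intro i k
    show x ^ i * (κ k).toMul = _
    rw [hκ, zpow_add]; rfl
  have hsurjA : ∀ w : Multiplicative (ℤ × ZMod g), ∃ i k : ℤ, w = Multiplicative.ofAdd (i, (k : ZMod g)) := by
    intro w
    obtain ⟨a, ha⟩ := ZMod.intCast_surjective w.toAdd.2
    exact ⟨w.toAdd.1, a, by rw [ha]; rfl⟩
  have hf1σ : ∀ w, f1 (σ' w) = y * f1 w * y⁻¹ := by
    intro w
    obtain ⟨i, k, rfl⟩ := hsurjA w
    have : σ' (Multiplicative.ofAdd (i, (k : ZMod g))) = Multiplicative.ofAdd (i, ((i + r * k : ℤ) : ZMod g)) := by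
      rw [hσ', hσ]; push_cast; rfl
    rw [this, hf1, hf1, ← conj_zpow, hr, ← zpow_mul]
    congr 1; ring
  have hf1z : ∀ (z : ℤ) w, f1 ((σ' ^ z) w) = y ^ z * f1 w * (y ^ z)⁻¹ := by
    intro z
    induction z using Int.induction_on with
    | zero => simp
    | succ k ih =>
      intro w
      rw [zpow_add_one, MulAut.mul_apply, ih, hf1σ, zpow_add_one]; group
    | pred k ih =>
      intro w
      rw [zpow_sub_one, MulAut.mul_apply, ih]
      have := hf1σ (σ'⁻¹ w)
      rw [MulAut.apply_inv_self] at this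
      rw [this, zpow_sub_one]; group
  let p : Multiplicative (ℤ × ZMod g) ⋊[ψ] Multiplicative ℤ →* G :=
    SemidirectProduct.lift f1 (zpowersHom G y) (by
      intro z
      exact MonoidHom.ext fun w => hf1z z.toAdd w)
  have hp : ∀ w z, p ⟨w, z⟩ = f1 w * y ^ (z.toAdd) := fun w z => rfl
  refine ⟨_, inferInstance, p, ?_, ?_, ⟨Multiplicative.ofAdd (1, 0), 1⟩, ⟨1, Multiplicative.ofAdd 1⟩, ?_, ?_, ?_⟩
  · intro e
    obtain ⟨i, j, rfl⟩ := hgen e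
    refine ⟨⟨Multiplicative.ofAdd ((i : ℤ), ((0 : ℤ) : ZMod g)), Multiplicative.ofAdd (j : ℤ)⟩, ?_⟩
    rw [hp, hf1]; simp
  · rintro ⟨w, z⟩ h ⟨w', z'⟩
    obtain ⟨i, k, rfl⟩ := hsurjA w
    induction z using Multiplicative.rec with | _ z => ?_
    induction z' using Multiplicative.rec with | _ z' => ?_
    rw [hp, hf1] at h
    obtain ⟨h1, ⟨q, hq⟩⟩ := hxy _ _ h
    rw [hx] at h1
    have hz : ψ (Multiplicative.ofAdd z) = 1 := by
      have hq' : z = n * q := hq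
      rw [hψ, hq', zpow_mul, zpow_natCast, hσn, one_zpow]
    have hfix : σ' (Multiplicative.ofAdd (i, (k : ZMod g))) = Multiplicative.ofAdd (i, (k : ZMod g)) := by
      rw [hσ', hσ]
      congr 2
      have := (ZMod.intCast_zmod_eq_zero_iff_dvd _ _).2 (hg.trans h1)
      push_cast at this
      linear_combination this
    have hfix' : ψ (Multiplicative.ofAdd z') (Multiplicative.ofAdd (i, (k : ZMod g))) = Multiplicative.ofAdd (i, (k : ZMod g)) := by
      rw [hψ]
      have : σ' ∈ MulAction.stabilizer (MulAut (Multiplicative (ℤ × ZMod g))) (Multiplicative.ofAdd (i, (k : ZMod g))) := hfix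
      exact Subgroup.zpow_mem _ this z'
    ext1
    · simp only [SemidirectProduct.mul_left]
      rw [hz, hfix', MulAut.one_apply, mul_comm]
    · simp only [SemidirectProduct.mul_right]
      rw [mul_comm]
  · rw [hp]
    have := hf1 1 0
    simp only [Int.cast_zero] at this
    rw [this]; simp
  · rw [hp]; simp
  · intro k hk
    have hT : ((⟨1, Multiplicative.ofAdd 1⟩ * ⟨Multiplicative.ofAdd (1, 0), 1⟩ * ⟨1, Multiplicative.ofAdd 1⟩⁻¹ * ⟨Multiplicative.ofAdd (1, 0), 1⟩⁻¹ : Multiplicative (ℤ × ZMod g) ⋊[ψ] Multiplicative ℤ)) = SemidirectProduct.inl (Multiplicative.ofAdd (0, 1)) := by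
      rw [mul_inv_eq_iff_eq_mul, mul_inv_eq_iff_eq_mul]
      ext1
      · simp [hψ, hσ', hσ, ← ofAdd_add]
      · simp
    rw [hT, ← map_zpow, ← ofAdd_zsmul] at hk
    have := SemidirectProduct.inl_injective (hk.trans (map_one _).symm)
    have h2 := congrArg (fun w => (Multiplicative.toAdd w).2) this
    simp at h2
    exact (ZMod.intCast_zmod_eq_zero_iff_dvd _ _).1 h2

theorem smc_main (m n : ℕ) (hm : 0 < m) (hn : 0 < n) (r : ℤ)
    (hrn : r ^ n ≡ 1 [ZMOD (m : ℤ)]) (d : ℕ)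
    (hd : (d : ℤ) * (m : ℤ) =
      (Int.gcd (m : ℤ) (r - 1) : ℤ) *
        (Int.gcd (m : ℤ) (∑ i ∈ Finset.range n, r ^ i) : ℤ))
    (G : Type) [Group G] (x y : G) (hx : ∀ k : ℤ, x ^ k = 1 ↔ (m : ℤ) ∣ k)
    (hy : y ^ n = 1)
    (hxy : ∀ i j : ℤ, x ^ i * y ^ j = 1 → x ^ i = 1 ∧ (n : ℤ) ∣ j)
    (hr : y * x * y⁻¹ = x ^ r)
    (hgen : ∀ g : G, ∃ i j : ℕ, g = x ^ i * y ^ j)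
    (F : Type) [Group F] [IsFreeGroup F] (π : F →* G) (hπ : Function.Surjective π)
    [hnorm : ((⁅(⊤ : Subgroup F), π.ker⁆).subgroupOf
        (π.ker ⊓ commutator F)).Normal] :
    Nonempty ((↥(π.ker ⊓ commutator F) ⧸
        ((⁅(⊤ : Subgroup F), π.ker⁆).subgroupOf (π.ker ⊓ commutator F)))
      ≃* Multiplicative (ZMod d)) := by
  set N : ℤ := ∑ i ∈ Finset.range n, r ^ i with hN
  obtain ⟨g, hg⟩ : ∃ g, g = Int.gcd (m : ℤ) N := ⟨_, rfl⟩
  obtain ⟨g1, hg1⟩ : ∃ g1, g1 = Int.gcd (m : ℤ) (r - 1) := ⟨_, rfl⟩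
  rw [← hg, ← hg1] at hd
  have hgm : (g : ℤ) ∣ m := hg ▸ Int.gcd_dvd_left _ _
  have hgN : (g : ℤ) ∣ N := hg ▸ Int.gcd_dvd_right _ _
  have hg1m : (g1 : ℤ) ∣ m := hg1 ▸ Int.gcd_dvd_left _ _
  have hg1pos : 0 < g1 := by rw [hg1]; exact Int.gcd_pos_of_ne_zero_left _ (by omega)
  have hgpos : 0 < g := by rw [hg]; exact Int.gcd_pos_of_ne_zero_left _ (by omega)
  obtain ⟨m1, hm1⟩ : ∃ m1 : ℕ, m = g1 * m1 := Int.natCast_dvd_natCast.1 hg1m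
  have hdm1 : d * m1 = g := by
    have h : d * m = g1 * g := by exact_mod_cast hd
    rw [hm1] at h
    exact Nat.eq_of_mul_eq_mul_left hg1pos (by rw [← h]; ring)
  have hm1pos : 0 < m1 := Nat.pos_of_mul_pos_left (hm1 ▸ hm)
  have hdpos : 0 < d := Nat.pos_of_ne_zero (by rintro rfl; simp at hdm1; omega)
  obtain ⟨s, hs⟩ : ∃ s, r - 1 = g1 * s := hg1 ▸ Int.gcd_dvd_right _ _
  have hcop : IsCoprime (m1 : ℤ) s := by
    rw [Int.isCoprime_iff_gcd_eq_one]
    have h : Int.gcd ((g1 : ℤ) * m1) (g1 * s) = g1 := by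
      rw [← hs]; exact_mod_cast (hm1 ▸ hg1.symm)
    rw [Int.gcd_mul_left, Int.natAbs_natCast] at h
    exact Nat.eq_of_mul_eq_mul_left hg1pos (by rw [h, mul_one])
  have hdvd : ∀ k : ℤ, (m : ℤ) ∣ (r - 1) * k ↔ (m1 : ℤ) ∣ k := by
    intro k
    rw [hm1, hs, Nat.cast_mul, mul_assoc, mul_dvd_mul_iff_left (by positivity)]
    exact ⟨fun h => hcop.dvd_of_dvd_mul_left h, fun h => h.mul_left _⟩
  have hgr : (m : ℤ) ∣ (r - 1) * g := by
    rw [hdvd, ← hdm1]; push_cast; exact dvd_mul_left _ _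
  -- the universal central extension quotient
  let K : Subgroup F := ⁅(⊤ : Subgroup F), π.ker⁆
  have hKle : K ≤ π.ker := Subgroup.commutator_le_right _ _
  let q : F →* F ⧸ K := QuotientGroup.mk' K
  have hq : ∀ f, q f = 1 ↔ f ∈ K := fun f => QuotientGroup.eq_one_iff f
  let p : F ⧸ K →* G := QuotientGroup.lift K π hKle
  have hpq : ∀ f, p (q f) = π f := fun f => rfl
  have hqs : Function.Surjective q := QuotientGroup.mk'_surjective K
  have hcent : ∀ a : F ⧸ K, p a = 1 → ∀ b, a * b = b * a := by
    intro a ha b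
    obtain ⟨a, rfl⟩ := hqs a
    obtain ⟨b, rfl⟩ := hqs b
    rw [hpq] at ha
    have : q (b * a * b⁻¹ * a⁻¹) = 1 := (hq _).2 (Subgroup.commutator_mem_commutator (Subgroup.mem_top b) ha)
    simp only [map_mul, map_inv] at this
    rw [mul_inv_eq_one, mul_inv_eq_iff_eq_mul] at this
    exact this.symm
  obtain ⟨xf, hxf⟩ := hπ x
  obtain ⟨yf, hyf⟩ := hπ y
  obtain ⟨t, ht⟩ : ∃ t, t = yf * xf * yf⁻¹ * xf⁻¹ := ⟨_, rfl⟩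
  have htc : t ∈ commutator F := by
    rw [ht]
    exact Subgroup.commutator_mem_commutator (Subgroup.mem_top yf) (Subgroup.mem_top xf)
  have hπt : π t = x ^ (r - 1) := by
    rw [ht]; simp only [map_mul, map_inv, hxf, hyf]; rw [hr, zpow_sub_one]
  obtain ⟨u1, u2, u3⟩ := smc_upper p hcent (q xf) (q yf) m n r
    (by rw [hpq, hxf]; exact_mod_cast (hx m).2 dvd_rfl) (by rw [hpq, hyf, hy])
    (by rw [hpq, hpq, hxf, hyf, hr]) (by rw [hpq, hpq, hxf, hyf]; exact hgen) (q t)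
    (by rw [ht]; simp only [map_mul, map_inv])
  have hord : orderOf (q t) = g := by
    apply Nat.dvd_antisymm
    · rw [hg]
      have a1 : (orderOf (q t) : ℤ) ∣ m := Int.natCast_dvd_natCast.2 (orderOf_dvd_of_pow_eq_one u1)
      have a2 : (orderOf (q t) : ℤ) ∣ N := orderOf_dvd_iff_zpow_eq_one.2 u2
      exact Int.natCast_dvd_natCast.1 (Int.dvd_coe_gcd a1 a2)
    · obtain ⟨E, _, p', hp's, hp'c, X, Y, hX, hY, hT⟩ :=
        smc_lower m n g r hn hgm hgN hgr hrn G x y hx hxy hr hgen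
      let θ : F →* E := IsFreeGroup.lift (fun i => (hp's (π (IsFreeGroup.of i))).choose)
      have hθ : p'.comp θ = π := by
        apply IsFreeGroup.ext_hom
        intro i
        simp only [θ, MonoidHom.comp_apply, IsFreeGroup.lift_of]
        exact (hp's (π (IsFreeGroup.of i))).choose_spec
      have hθ' : ∀ f, p' (θ f) = π f := fun f => by rw [← hθ]; rfl
      have hKθ : K ≤ θ.ker := by
        show ⁅(⊤ : Subgroup F), π.ker⁆ ≤ _
        rw [Subgroup.commutator_le]
        intro b _ a ha
        rw [MonoidHom.mem_ker, map_commutatorElement, commutatorElement_eq_one_iff_mul_comm]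
        exact (hp'c _ (by rw [hθ']; exact ha) _).symm
      have hθt : θ t = Y * X * Y⁻¹ * X⁻¹ := by
        obtain ⟨c1, hc1⟩ : ∃ c, c = (θ xf) * X⁻¹ := ⟨_, rfl⟩
        obtain ⟨c2, hc2⟩ : ∃ c, c = (θ yf) * Y⁻¹ := ⟨_, rfl⟩
        have k1 := hp'c c1 (by rw [hc1]; simp [hθ', hxf, hX])
        have k2 := hp'c c2 (by rw [hc2]; simp [hθ', hyf, hY])
        have e1 : θ xf = c1 * X := by rw [hc1]; group
        have e2 : θ yf = c2 * Y := by rw [hc2]; group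
        rw [ht]; simp only [map_mul, map_inv]
        rw [e1, e2]
        have s1 : c2 * Y * (c1 * X) * (c2 * Y)⁻¹ * (c1 * X)⁻¹
          = c2 * (Y * c1) * X * Y⁻¹ * c2⁻¹ * X⁻¹ * c1⁻¹ := by group
        rw [s1, ← k1]
        have s2 : c2 * (c1 * Y) * X * Y⁻¹ * c2⁻¹ * X⁻¹ * c1⁻¹
          = c2 * (c1 * (Y * X * Y⁻¹)) * c2⁻¹ * X⁻¹ * c1⁻¹ := by group
        rw [s2, k2]
        have s3 : c1 * (Y * X * Y⁻¹) * c2 * c2⁻¹ * X⁻¹ * c1⁻¹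
          = c1 * (Y * X * Y⁻¹ * X⁻¹) * c1⁻¹ := by group
        rw [s3, k1]; group
      have h0 : q (t ^ orderOf (q t)) = 1 := by rw [map_pow, pow_orderOf_eq_one]
      have h1 : θ (t ^ orderOf (q t)) = 1 := hKθ ((hq _).1 h0)
      rw [map_pow, hθt, ← zpow_natCast] at h1
      exact Int.natCast_dvd_natCast.1 (hT _ h1)
  have hord2 : orderOf (q t ^ m1) = d := by
    rw [orderOf_pow_of_dvd hm1pos.ne' (by rw [hord, ← hdm1]; exact dvd_mul_left _ _), hord, ← hdm1,
      Nat.mul_div_cancel _ hm1pos]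
  let ρ : ↥(π.ker ⊓ commutator F) →* F ⧸ K := q.comp (Subgroup.subtype _)
  have hρk : ρ.ker = K.subgroupOf (π.ker ⊓ commutator F) := by
    ext f
    rw [MonoidHom.mem_ker, Subgroup.mem_subgroupOf]
    exact hq _
  have hρr : ρ.range = Subgroup.zpowers (q t ^ m1) := by
    apply le_antisymm
    · rintro _ ⟨⟨f, hf1, hf2⟩, rfl⟩
      have hf3 : q f ∈ commutator (F ⧸ K) := by
        have := Subgroup.mem_map_of_mem q hf2
        rw [commutator_def, Subgroup.map_commutator] at this
        exact Subgroup.commutator_mono le_top le_top this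
      obtain ⟨k, hk⟩ := u3 hf3
      have hk' : q t ^ k = q f := hk
      have hk2 := congrArg p hk'
      rw [map_zpow, hpq, hpq, hπt, MonoidHom.mem_ker.1 hf1, ← zpow_mul, hx, hdvd] at hk2
      obtain ⟨j, rfl⟩ := hk2
      refine ⟨j, ?_⟩
      show (q t ^ m1) ^ j = q f
      rw [← hk', zpow_mul, zpow_natCast]
    · rw [Subgroup.zpowers_le]
      refine ⟨⟨t ^ m1, ?_, Subgroup.pow_mem _ htc _⟩, map_pow q t m1⟩
      show π (t ^ m1) = 1
      rw [map_pow, hπt, ← zpow_natCast, ← zpow_mul, hx, hdvd]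
  have e3 : Nat.card (Subgroup.zpowers (q t ^ m1)) = d := by rw [Nat.card_zpowers, hord2]
  have e4 : Multiplicative (ZMod d) ≃* Subgroup.zpowers (q t ^ m1) := by
    rw [← e3]
    exact zmodCyclicMulEquiv inferInstance
  exact ⟨(QuotientGroup.quotientMulEquivOfEq hρk.symm).trans
    ((QuotientGroup.quotientKerEquivRange ρ).trans
      ((MulEquiv.subgroupCongr hρr).trans e4.symm))⟩



/-- (Lemma 5.13 of "G-marked moduli spaces".)
Let `G = ⟨x, y | x^m = y^n = 1, y·x·y⁻¹ = x^r⟩` be the split metacyclic group,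
realized concretely as the semidirect product `(ℤ/mℤ) ⋊ (ℤ/nℤ)` in which the
generator of `ℤ/nℤ` acts on `ℤ/mℤ` by multiplication by `r` (here `r` is a unit
modulo `m` with `r^n ≡ 1 (mod m)`), and set
`d = gcd(m, r−1)·gcd(m, 1 + r + ⋯ + r^{n−1}) / m`.
Then `H₂(G, ℤ) ≅ ℤ/dℤ`; here the second group homology with trivial integer
coefficients (the Schur multiplier) is expressed via Hopf's formula: for every
free presentation `π : F ↠ G` with kernel `R`, one has
`(R ∩ [F,F]) / [F,R] ≅ ℤ/dℤ`. -/
theorem schur_multiplier_split_metacyclic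
    (m n : ℕ) (hm : 0 < m) (hn : 0 < n) (r : ℤ)
    (hr : IsUnit (r : ZMod m)) (hrn : r ^ n ≡ 1 [ZMOD (m : ℤ)])
    (φ : Multiplicative (ZMod n) →* MulAut (Multiplicative (ZMod m)))
    (hφ : ∀ (a : ZMod n) (b : ZMod m),
      φ (Multiplicative.ofAdd a) (Multiplicative.ofAdd b)
        = Multiplicative.ofAdd ((r : ZMod m) ^ a.val * b))
    (d : ℕ)
    (hd : (d : ℤ) * (m : ℤ) =
      (Int.gcd (m : ℤ) (r - 1) : ℤ) *
        (Int.gcd (m : ℤ) (∑ i ∈ Finset.range n, r ^ i) : ℤ))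
    (F : Type) [Group F] [IsFreeGroup F]
    (π : F →* (Multiplicative (ZMod m) ⋊[φ] Multiplicative (ZMod n)))
    (hπ : Function.Surjective π)
    [hnorm : ((⁅(⊤ : Subgroup F), π.ker⁆).subgroupOf
        (π.ker ⊓ commutator F)).Normal] :
    Nonempty ((↥(π.ker ⊓ commutator F) ⧸
        ((⁅(⊤ : Subgroup F), π.ker⁆).subgroupOf (π.ker ⊓ commutator F)))
      ≃* Multiplicative (ZMod d)) := by
  have : NeZero m := ⟨hm.ne'⟩
  have : NeZero n := ⟨hn.ne'⟩
  have hφ1 : ∀ b : ZMod m, φ (Multiplicative.ofAdd 1) (Multiplicative.ofAdd b)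
      = Multiplicative.ofAdd ((r : ZMod m) * b) := by
    intro b
    rw [hφ]
    rcases Nat.lt_or_ge 1 n with h | h
    · have : Fact (1 < n) := ⟨h⟩
      rw [ZMod.val_one, pow_one]
    · obtain rfl : n = 1 := by omega
      have := (ZMod.intCast_eq_intCast_iff _ _ _).2 hrn
      simp only [pow_one, Int.cast_one] at this
      rw [this, one_pow]
  have hxk : ∀ k : ℤ, (SemidirectProduct.inl (Multiplicative.ofAdd (1 : ZMod m)) :
      Multiplicative (ZMod m) ⋊[φ] Multiplicative (ZMod n)) ^ k
      = SemidirectProduct.inl (Multiplicative.ofAdd (k : ZMod m)) := by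
    intro k
    rw [← map_zpow, ← ofAdd_zsmul, zsmul_one]
  have hyk : ∀ k : ℤ, (SemidirectProduct.inr (Multiplicative.ofAdd (1 : ZMod n)) :
      Multiplicative (ZMod m) ⋊[φ] Multiplicative (ZMod n)) ^ k
      = SemidirectProduct.inr (Multiplicative.ofAdd (k : ZMod n)) := by
    intro k
    rw [← map_zpow, ← ofAdd_zsmul, zsmul_one]
  have hx : ∀ k : ℤ, (SemidirectProduct.inl (Multiplicative.ofAdd (1 : ZMod m)) :
      Multiplicative (ZMod m) ⋊[φ] Multiplicative (ZMod n)) ^ k = 1 ↔ (m : ℤ) ∣ k := by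
    intro k
    rw [hxk, ← ZMod.intCast_zmod_eq_zero_iff_dvd, ← ofAdd_eq_one,
      ← map_one SemidirectProduct.inl, SemidirectProduct.inl_inj]
  refine smc_main m n hm hn r hrn d hd _
    (SemidirectProduct.inl (Multiplicative.ofAdd 1))
    (SemidirectProduct.inr (Multiplicative.ofAdd 1)) hx ?_ ?_ ?_ ?_ F π hπ
  · rw [← zpow_natCast, hyk]; simp
  · intro i j h
    rw [hx]
    rw [hxk, hyk] at h
    have h1 := congrArg SemidirectProduct.left h
    have h2 := congrArg SemidirectProduct.right h
    simp only [SemidirectProduct.mul_left, SemidirectProduct.mul_right, SemidirectProduct.left_inl,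
      SemidirectProduct.right_inl, SemidirectProduct.left_inr, SemidirectProduct.right_inr,
      map_one, mul_one, one_mul, SemidirectProduct.one_left, SemidirectProduct.one_right,
      ofAdd_eq_one] at h1 h2
    exact ⟨(ZMod.intCast_zmod_eq_zero_iff_dvd _ _).1 h1,
      (ZMod.intCast_zmod_eq_zero_iff_dvd _ _).1 h2⟩
  · rw [hxk, ← map_inv, ← SemidirectProduct.inl_aut, hφ1, mul_one]
  · intro e
    refine ⟨(Multiplicative.toAdd e.left).val, (Multiplicative.toAdd e.right).val, ?_⟩
    rw [← zpow_natCast, ← zpow_natCast, hxk, hyk]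
    simp only [Int.cast_natCast, ZMod.natCast_zmod_val, ofAdd_toAdd]
    exact (SemidirectProduct.inl_left_mul_inr_right e).symm
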